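/- Let N ≥ 1 and let u, v : ℝ^N → ℝ be of class C². Then (u, v) is a classical solution of the system (P_Λ) with Λ = 3 (no sign assumption) if and only if there exist functions w₁, w₂ : ℝ^N → ℝ of class C², each solving the Allen–Cahn equation −Δw = w − w³ pointwise on ℝ^N, such that u = (w₁ + w₂)/2 and v = (w₁ − w₂)/2 on ℝ^N. -/

import Mathlib

/-! Put `w₁ = u + v` and `w₂ = u - v`. Since `(u ± v)³ = (u³ + 3 u v²) ± (v³ + 3 u² v)`, the value
`Λ = 3` is exactly the one for which the sum and the difference of the two equations of the system
are the Allen–Cahn equations for `w₁` and `w₂`. -/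

open scoped RealInnerProductSpace
open Filter

noncomputable section

/-- The Laplacian of `f : ℝ^N → ℝ`, as the sum of the pure second partial
derivatives in the coordinate directions. -/
def lap (N : ℕ) (f : EuclideanSpace ℝ (Fin N) → ℝ) (x : EuclideanSpace ℝ (Fin N)) : ℝ :=
  ∑ i : Fin N,
    fderiv ℝ (fun y => fderiv ℝ f y (EuclideanSpace.single i 1)) x (EuclideanSpace.single i 1)

/-- `(u, v)` is a classical solution of the system `(P_Λ)` on `ℝ^N`:
`u, v` are `C²` and `-Δu = u - u³ - Λ u v²`, `-Δv = v - v³ - Λ u² v` pointwise. -/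
def IsSolution (N : ℕ) (Λ : ℝ) (u v : EuclideanSpace ℝ (Fin N) → ℝ) : Prop :=
  ContDiff ℝ 2 u ∧ ContDiff ℝ 2 v ∧
  (∀ x, -lap N u x = u x - (u x) ^ 3 - Λ * u x * (v x) ^ 2) ∧
  (∀ x, -lap N v x = v x - (v x) ^ 3 - Λ * (u x) ^ 2 * v x)

/-- Condition `(h∞)`: `u → 1`, `v → 0` as `x_N → +∞` and `u → 0`, `v → 1` as
`x_N → -∞`, uniformly with respect to `x' ∈ ℝ^{N-1}` (the dimension is `N + 1`). -/
def Hinf (N : ℕ) (u v : EuclideanSpace ℝ (Fin (N + 1)) → ℝ) : Prop :=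
  (∀ ε : ℝ, 0 < ε → ∃ M : ℝ, ∀ x : EuclideanSpace ℝ (Fin (N + 1)),
    M ≤ x (Fin.last N) → |u x - 1| < ε ∧ |v x| < ε) ∧
  (∀ ε : ℝ, 0 < ε → ∃ M : ℝ, ∀ x : EuclideanSpace ℝ (Fin (N + 1)),
    x (Fin.last N) ≤ M → |u x| < ε ∧ |v x - 1| < ε)

/-- `w` is a classical solution of the Allen–Cahn equation `-Δw = w - w³` on `ℝ^N`. As in
`IsSolution`, being of class `C²` is part of the notion. -/
def IsAllenCahnSolution (N : ℕ) (w : EuclideanSpace ℝ (Fin N) → ℝ) : Prop :=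
  ContDiff ℝ 2 w ∧ ∀ x, -lap N w x = w x - (w x) ^ 3

section Laplacian

open scoped Laplacian

variable {N : ℕ} {f g : EuclideanSpace ℝ (Fin N) → ℝ} {x : EuclideanSpace ℝ (Fin N)}

theorem lap_eq_laplacian (hf : DifferentiableAt ℝ (fderiv ℝ f) x) : lap N f x = Δ f x := by
  have fderiv_partial (e : EuclideanSpace ℝ (Fin N)) :
      fderiv ℝ (fun y => fderiv ℝ f y e) x e = fderiv ℝ (fderiv ℝ f) x e e := by
    simp [fderiv_clm_apply hf (differentiableAt_const e)]
  simp only [lap, fderiv_partial,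
    InnerProductSpace.laplacian_eq_iteratedFDeriv_orthonormalBasis f
      (EuclideanSpace.basisFun (Fin N) ℝ),
    iteratedFDeriv_two_apply, EuclideanSpace.basisFun_apply, Matrix.cons_val_zero,
    Matrix.cons_val_one]

theorem lap_eq_laplacian_of_contDiffAt (hf : ContDiffAt ℝ 2 f x) : lap N f x = Δ f x :=
  lap_eq_laplacian ((hf.fderiv_right (m := 1) (by norm_num)).differentiableAt one_ne_zero)

theorem lap_add (hf : ContDiffAt ℝ 2 f x) (hg : ContDiffAt ℝ 2 g x) :
    lap N (f + g) x = lap N f x + lap N g x := by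
  rw [lap_eq_laplacian_of_contDiffAt hf, lap_eq_laplacian_of_contDiffAt hg,
    lap_eq_laplacian_of_contDiffAt (f := f + g) (hf.add hg), hf.laplacian_add hg]

theorem lap_sub (hf : ContDiffAt ℝ 2 f x) (hg : ContDiffAt ℝ 2 g x) :
    lap N (f - g) x = lap N f x - lap N g x := by
  rw [lap_eq_laplacian_of_contDiffAt hf, lap_eq_laplacian_of_contDiffAt hg,
    lap_eq_laplacian_of_contDiffAt (f := f - g) (hf.sub hg), hf.laplacian_sub hg]

end Laplacian

theorem isSolution_three_iff {N : ℕ} {u v : EuclideanSpace ℝ (Fin N) → ℝ}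
    (hu : ContDiff ℝ 2 u) (hv : ContDiff ℝ 2 v) :
    IsSolution N 3 u v ↔ IsAllenCahnSolution N (u + v) ∧ IsAllenCahnSolution N (u - v) := by
  have hsum : ContDiff ℝ 2 (u + v) := hu.add hv
  have hdiff : ContDiff ℝ 2 (u - v) := hu.sub hv
  have lap_sum (x) : lap N (u + v) x = lap N u x + lap N v x := lap_add hu.contDiffAt hv.contDiffAt
  have lap_diff (x) : lap N (u - v) x = lap N u x - lap N v x := lap_sub hu.contDiffAt hv.contDiffAt
  simp only [IsSolution, IsAllenCahnSolution, hu, hv, hsum, hdiff, true_and, lap_sum,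
    lap_diff, Pi.add_apply, Pi.sub_apply]
  constructor
  · rintro ⟨eq_u, eq_v⟩
    exact ⟨fun x => by linear_combination eq_u x + eq_v x,
      fun x => by linear_combination eq_u x - eq_v x⟩
  · rintro ⟨eq_sum, eq_diff⟩
    exact ⟨fun x => by linear_combination (eq_sum x + eq_diff x) / 2,
      fun x => by linear_combination (eq_sum x - eq_diff x) / 2⟩

/-- Proposition 6.1: characterization of solutions of the
system with `Λ = 3` in terms of pairs of solutions of the Allen–Cahn equation. -/
theorem stmt_18 (N : ℕ)
    (u v : EuclideanSpace ℝ (Fin (N + 1)) → ℝ)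
    (hu : ContDiff ℝ 2 u) (hv : ContDiff ℝ 2 v) :
    IsSolution (N + 1) 3 u v ↔
    ∃ w₁ w₂ : EuclideanSpace ℝ (Fin (N + 1)) → ℝ,
      ContDiff ℝ 2 w₁ ∧ ContDiff ℝ 2 w₂ ∧
      (∀ x, -lap (N + 1) w₁ x = w₁ x - (w₁ x) ^ 3) ∧
      (∀ x, -lap (N + 1) w₂ x = w₂ x - (w₂ x) ^ 3) ∧
      (∀ x, u x = (w₁ x + w₂ x) / 2 ∧ v x = (w₁ x - w₂ x) / 2) := by
  rw [isSolution_three_iff hu hv]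
  constructor
  · rintro ⟨⟨hsum, eq_sum⟩, hdiff, eq_diff⟩
    refine ⟨u + v, u - v, hsum, hdiff, eq_sum, eq_diff, fun x => ?_⟩
    simp only [Pi.add_apply, Pi.sub_apply]
    constructor <;> ring
  · rintro ⟨w₁, w₂, hw₁, hw₂, eq₁, eq₂, huv⟩
    have sum_eq : u + v = w₁ := by
      ext x
      rw [Pi.add_apply, (huv x).1, (huv x).2]
      ring
    have diff_eq : u - v = w₂ := by
      ext x
      rw [Pi.sub_apply, (huv x).1, (huv x).2]
      ring
    rw [sum_eq, diff_eq]
    exact ⟨⟨hw₁, eq₁⟩, hw₂, eq₂⟩
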